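/- Let U be an open neighborhood of (0,0) in ℝ² contained in {|η| + |ε| < 1/100}, and suppose Λ : U → ℝ and Φ : U × [0,π] → ℝ are real-analytic functions such that for every (η,ε) ∈ U: the function x ↦ Φ(η,ε,x) satisfies T_{η,ε}Φ(η,ε,·) + Λ(η,ε)·Φ(η,ε,·) = 0 on (0,π), Φ(η,ε,0) = Φ(η,ε,π) = 0, and the normalization ∫₀^π Φ(η,ε,x) sin(x) dx = π/2; and suppose Λ(0,0) = 4 and Φ(0,0,x) = sin(x). Then there exist a constant C > 0 and a neighborhood V ⊆ U of (0,0) such that |Λ(η,ε) − 4 − 3πη − 6ε| ≤ C(η² + ε²) for all (η,ε) ∈ V. -/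

import Mathlib

open Set Real

noncomputable section

/-- The operator `T_{η,ε} u = u'' − [η(1+ε)/(1−η(1+ε)x)] u' − [3(1+ε)²/(1−η(1+ε)x)²] u`,
with derivatives taken within `[0,π]`. -/
def Tde (η ε : ℝ) (u : ℝ → ℝ) (x : ℝ) : ℝ :=
  derivWithin (derivWithin u (Set.Icc 0 π)) (Set.Icc 0 π) x
    - (η * (1 + ε) / (1 - η * (1 + ε) * x)) * derivWithin u (Set.Icc 0 π) x
    - (3 * (1 + ε)^2 / (1 - η * (1 + ε) * x)^2) * u x

lemma aux_lip (F : (ℝ × ℝ) × ℝ → ℝ)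
    (hF : ∀ x ∈ Set.Icc (0:ℝ) π, AnalyticAt ℝ F ((0, 0), x)) :
    ∃ K : ℝ, 0 ≤ K ∧ ∀ᶠ p in nhds ((0, 0) : ℝ × ℝ), ∀ x ∈ Set.Icc (0:ℝ) π,
      |F (p, x) - F ((0, 0), x)| ≤ K * (|p.1| + |p.2|) := by
  refine (isCompact_Icc (a := (0:ℝ)) (b := π)).induction_on
    (p := fun s => ∃ K : ℝ, 0 ≤ K ∧ ∀ᶠ p in nhds ((0, 0) : ℝ × ℝ), ∀ x ∈ s,
      |F (p, x) - F ((0, 0), x)| ≤ K * (|p.1| + |p.2|)) ?_ ?_ ?_ ?_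
  · exact ⟨0, le_rfl, by simp⟩
  · rintro s t hst ⟨K, hK, h⟩
    exact ⟨K, hK, h.mono fun p hp x hx => hp x (hst hx)⟩
  · rintro s t ⟨K, hK, h⟩ ⟨L, hL, h'⟩
    refine ⟨K + L, by positivity, ?_⟩
    filter_upwards [h, h'] with p hp hp' x hx
    have h0 : 0 ≤ |p.1| + |p.2| := by positivity
    rcases hx with hx | hx
    · nlinarith [hp x hx, mul_nonneg hL h0]
    · nlinarith [hp' x hx, mul_nonneg hK h0]
  · intro x hx
    have h1 : ContDiffAt ℝ 1 F ((0, 0), x) := (hF x hx).contDiffAt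
    obtain ⟨K, t, ht, hl⟩ := h1.exists_lipschitzOnWith
    rw [nhds_prod_eq, Filter.mem_prod_iff] at ht
    obtain ⟨A, hA, B, hB, hAB⟩ := ht
    refine ⟨B, mem_nhdsWithin_of_mem_nhds hB, K, K.2, ?_⟩
    filter_upwards [hA] with p hp y hy
    have h2 := hl.dist_le_mul (p, y) (hAB ⟨hp, hy⟩) ((0, 0), y) (hAB ⟨mem_of_mem_nhds hA, hy⟩)
    rw [Real.dist_eq] at h2
    refine h2.trans (mul_le_mul_of_nonneg_left ?_ K.2)
    have h3 : dist (p, y) (((0, 0) : ℝ × ℝ), y) = max |p.1| |p.2| := by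
      simp [Prod.dist_eq, Real.dist_eq]
    rw [h3]
    exact max_le (by linarith [abs_nonneg p.2]) (by linarith [abs_nonneg p.1])

lemma aux_coeff (η ε x : ℝ) (h : |η| + |ε| < 1/100) (hx0 : 0 ≤ x) (hx : x ≤ 4) :
    |η * (1 + ε) / (1 - η * (1 + ε) * x) - η| ≤ 1000 * (|η| + |ε|)^2 ∧
    |3 * (1 + ε)^2 / (1 - η * (1 + ε) * x)^2 - 3 - (6 * ε + 6 * η * x)|
      ≤ 1000 * (|η| + |ε|)^2 := by
  set s := |η| + |ε| with hs
  have hs0 : 0 ≤ s := by positivity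
  have hη : |η| ≤ s := by linarith [abs_nonneg ε]
  have hε : |ε| ≤ s := by linarith [abs_nonneg η]
  have he1 : |1 + ε| ≤ 2 := by
    rw [abs_le] at hε ⊢; constructor <;> linarith
  have hxa : |x| ≤ 4 := by rw [abs_of_nonneg hx0]; exact hx
  obtain ⟨w, hw⟩ : ∃ w, w = η * (1 + ε) * x := ⟨_, rfl⟩
  have hwb : |w| ≤ 8 * s := by
    rw [hw, abs_mul, abs_mul]
    calc |η| * |1 + ε| * |x| ≤ s * 2 * 4 := by gcongr
      _ = 8 * s := by ring
  have hηx : |η * x| ≤ 4 * s := by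
    rw [abs_mul]
    calc |η| * |x| ≤ s * 4 := by gcongr
      _ = 4 * s := by ring
  rw [← hw]
  have hwu := abs_le.1 hwb
  have hd : 9/10 ≤ 1 - w := by linarith
  have hd0 : (1 - w) ≠ 0 := by linarith
  have hd2 : 81/100 ≤ (1 - w)^2 := by nlinarith
  constructor
  · have e : η * (1 + ε) / (1 - w) - η = (η * ε + η * w) / (1 - w) := by
      field_simp; ring
    rw [e, abs_div, abs_of_pos (by linarith : 0 < 1 - w), div_le_iff₀ (by linarith)]
    have : |η * ε + η * w| ≤ 9 * s^2 := by
      calc |η * ε + η * w| ≤ |η| * |ε| + |η| * |w| := by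
            rw [← abs_mul, ← abs_mul]; exact abs_add_le _ _
        _ ≤ s * s + s * (8 * s) := by gcongr
        _ = 9 * s^2 := by ring
    nlinarith [sq_nonneg s]
  · have e : 3 * (1 + ε)^2 / (1 - w)^2 - 3 - (6 * ε + 6 * η * x) =
        (3 * (ε * ε) + 6 * (ε * (η * x)) - 3 * (w * w)
          + (6 * ε + 6 * (η * x)) * (w * (2 - w))) / (1 - w)^2 := by
      have hw' : 6 * w = 6 * (η * x) + 6 * (ε * (η * x)) := by rw [hw]; ring
      rw [eq_div_iff (pow_ne_zero 2 hd0)]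
      have : 3 * (1 + ε)^2 / (1 - w)^2 * (1 - w)^2 = 3 * (1 + ε)^2 :=
        div_mul_cancel₀ _ (pow_ne_zero 2 hd0)
      linear_combination this + hw'
    rw [e, abs_div, abs_of_pos (by linarith : 0 < (1 - w)^2), div_le_iff₀ (by linarith)]
    have b1 : |ε * ε| ≤ s * s := by rw [abs_mul]; gcongr
    have b2 : |ε * (η * x)| ≤ s * (4 * s) := by rw [abs_mul]; gcongr
    have b3 : |w * w| ≤ (8 * s) * (8 * s) := by rw [abs_mul]; gcongr
    have b4 : |6 * ε + 6 * (η * x)| ≤ 30 * s := by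
      rw [abs_le] at hε hηx ⊢; constructor <;> linarith
    have b5 : |2 - w| ≤ 11/5 := by
      rw [abs_le]; constructor <;> linarith
    have b6 : |(6 * ε + 6 * (η * x)) * (w * (2 - w))| ≤ (30 * s) * ((8 * s) * (11/5)) := by
      rw [abs_mul, abs_mul]; gcongr
    have : |3 * (ε * ε) + 6 * (ε * (η * x)) - 3 * (w * w)
          + (6 * ε + 6 * (η * x)) * (w * (2 - w))| ≤ 800 * s^2 := by
      rw [abs_le] at b1 b2 b3 b6 ⊢
      constructor <;> nlinarith [sq_nonneg s]
    nlinarith [mul_le_mul_of_nonneg_left hd2 (sq_nonneg s), sq_nonneg s]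

lemma aux_int (η ε : ℝ) :
    ∫ x in (0:ℝ)..π, Real.sin x * (η * Real.cos x + (6 * ε + 6 * η * x) * Real.sin x)
      = π / 2 * (6 * ε + 3 * π * η) := by
  have h : ∀ x ∈ Set.uIcc (0:ℝ) π, HasDerivAt
      (fun x => η / 2 * (Real.sin x)^2 + 3 * ε * (x - Real.sin x * Real.cos x)
        + 3 * η * (x^2 / 2 - x * Real.sin x * Real.cos x + (Real.sin x)^2 / 2))
      (Real.sin x * (η * Real.cos x + (6 * ε + 6 * η * x) * Real.sin x)) x := by
    intro x _
    have hs := Real.hasDerivAt_sin x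
    have hc := Real.hasDerivAt_cos x
    have hi := hasDerivAt_id x
    have := (((hs.pow 2).const_mul (η / 2)).add ((hi.sub (hs.mul hc)).const_mul (3 * ε))).add
      (((((hi.pow 2).div_const 2).sub ((hi.mul hs).mul hc)).add
        ((hs.pow 2).div_const 2)).const_mul (3 * η))
    refine this.congr_deriv ?_
    simp only [id]
    have e := Real.sin_sq_add_cos_sq x
    simp
    linear_combination (-3 * ε - 3 * η * x) * e
  rw [intervalIntegral.integral_eq_sub_of_hasDerivAt h
    (Continuous.intervalIntegrable (by fun_prop) _ _)]
  simp
  ring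

lemma aux_prod (a b A B : ℝ) (e m k N : ℝ) (hA : |a - A| ≤ e) (hB : |b| ≤ N)
    (hAm : |A| ≤ m) (hBk : |b - B| ≤ k) (hN : 0 ≤ N) (hm : 0 ≤ m) :
    |a * b - A * B| ≤ e * N + m * k := by
  have : a * b - A * B = (a - A) * b + A * (b - B) := by ring
  rw [this]
  refine (abs_add_le _ _).trans ?_
  rw [abs_mul, abs_mul]
  have := abs_nonneg (a - A)
  have := abs_nonneg (b - B)
  gcongr
  linarith

/-- First-order expansion of the first Dirichlet eigenvalue branch of
`T_{η,ε}`: `Λ(η,ε) = 4 + 3πη + 6ε + O(η² + ε²)`. -/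
theorem first_dirichlet_branch_first_order
    (U : Set (ℝ × ℝ)) (hUopen : IsOpen U) (hU0 : (0, 0) ∈ U)
    (hUsub : U ⊆ {p : ℝ × ℝ | |p.1| + |p.2| < 1/100})
    (Λ : ℝ × ℝ → ℝ) (Φ : ℝ × ℝ → ℝ → ℝ)
    (hΛ : AnalyticOnNhd ℝ Λ U)
    (hΦ : AnalyticOnNhd ℝ (fun q : (ℝ × ℝ) × ℝ => Φ q.1 q.2) (U ×ˢ Set.Icc 0 π))
    (heq : ∀ p ∈ U, ∀ x ∈ Set.Ioo (0:ℝ) π, Tde p.1 p.2 (Φ p) x + Λ p * Φ p x = 0)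
    (hbc : ∀ p ∈ U, Φ p 0 = 0 ∧ Φ p π = 0)
    (hnorm : ∀ p ∈ U, ∫ x in (0:ℝ)..π, Φ p x * Real.sin x = π/2)
    (hΛ0 : Λ (0, 0) = 4)
    (hΦ0 : ∀ x ∈ Set.Icc (0:ℝ) π, Φ (0, 0) x = Real.sin x) :
    ∃ C > (0:ℝ), ∃ V ⊆ U, IsOpen V ∧ (0, 0) ∈ V ∧
      ∀ p ∈ V, |Λ p - 4 - 3 * π * p.1 - 6 * p.2| ≤ C * (p.1^2 + p.2^2) := by
  have hπ := Real.pi_pos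
  have hπ4 : π ≤ 4 := Real.pi_le_four
  obtain ⟨F, hFdef⟩ : ∃ F : (ℝ × ℝ) × ℝ → ℝ, F = fun q => Φ q.1 q.2 := ⟨_, rfl⟩
  rw [← hFdef] at hΦ
  have hFe : ∀ p x, Φ p x = F (p, x) := by intro p x; rw [hFdef]
  obtain ⟨G, hGdef⟩ : ∃ G : (ℝ × ℝ) × ℝ → ℝ, G = fun q => fderiv ℝ F q (0, 1) := ⟨_, rfl⟩
  obtain ⟨H, hHdef⟩ : ∃ H : (ℝ × ℝ) × ℝ → ℝ, H = fun q => fderiv ℝ G q (0, 1) := ⟨_, rfl⟩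
  have step : ∀ F : (ℝ × ℝ) × ℝ → ℝ, AnalyticOnNhd ℝ F (U ×ˢ Set.Icc 0 π) →
      AnalyticOnNhd ℝ (fun q => fderiv ℝ F q (0, 1)) (U ×ˢ Set.Icc 0 π) ∧
      ∀ p ∈ U, ∀ x ∈ Set.Icc (0:ℝ) π,
        HasDerivAt (fun y => F (p, y)) (fderiv ℝ F (p, x) (0, 1)) x := by
    intro F hF
    constructor
    · intro q hq
      exact (((ContinuousLinearMap.apply ℝ ℝ ((0, 1) : (ℝ × ℝ) × ℝ)).analyticAt _).comp
        (hF.fderiv q hq))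
    · intro p hp x hx
      have h1 : HasFDerivAt F (fderiv ℝ F (p, x)) (p, x) :=
        (hF (p, x) ⟨hp, hx⟩).differentiableAt.hasFDerivAt
      exact h1.comp_hasDerivAt x ((hasDerivAt_const x p).prodMk (hasDerivAt_id x))
  obtain ⟨hGan, hFd⟩ := step F hΦ
  rw [← hGdef] at hGan
  obtain ⟨hHan, hGd⟩ := step G hGan
  rw [← hHdef] at hHan
  have hFd : ∀ p ∈ U, ∀ x ∈ Set.Icc (0:ℝ) π, HasDerivAt (fun y => F (p, y)) (G (p, x)) x := by
    intro p hp x hx; rw [hGdef]; exact hFd p hp x hx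
  have hGd : ∀ p ∈ U, ∀ x ∈ Set.Icc (0:ℝ) π, HasDerivAt (fun y => G (p, y)) (H (p, x)) x := by
    intro p hp x hx; rw [hHdef]; exact hGd p hp x hx
  have hHc : ∀ p ∈ U, ContinuousOn (fun y => H (p, y)) (Set.Icc 0 π) := by
    intro p hp
    exact hHan.continuousOn.comp (by fun_prop) (fun x hx => ⟨hp, hx⟩)
  have huniq : UniqueDiffOn ℝ (Set.Icc 0 π) := uniqueDiffOn_Icc hπ
  have hΦF : ∀ p, Φ p = fun y => F (p, y) := fun p => funext (hFe p)
  have hD1 : ∀ p ∈ U, ∀ x ∈ Set.Icc (0:ℝ) π, derivWithin (Φ p) (Set.Icc 0 π) x = G (p, x) := by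
    intro p hp x hx
    rw [hΦF]
    exact (hFd p hp x hx).hasDerivWithinAt.derivWithin (huniq x hx)
  have hD2 : ∀ p ∈ U, ∀ x ∈ Set.Icc (0:ℝ) π,
      derivWithin (derivWithin (Φ p) (Set.Icc 0 π)) (Set.Icc 0 π) x = H (p, x) := by
    intro p hp x hx
    rw [derivWithin_congr (fun y hy => hD1 p hp y hy) (hD1 p hp x hx)]
    exact (hGd p hp x hx).hasDerivWithinAt.derivWithin (huniq x hx)
  have hF0 : ∀ x ∈ Set.Icc (0:ℝ) π, F ((0, 0), x) = Real.sin x := by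
    intro x hx; rw [← hFe]; exact hΦ0 x hx
  have hG0 : ∀ x ∈ Set.Icc (0:ℝ) π, G ((0, 0), x) = Real.cos x := by
    intro x hx
    rw [← hD1 _ hU0 x hx, derivWithin_congr hΦ0 (hΦ0 x hx)]
    exact (Real.hasDerivAt_sin x).hasDerivWithinAt.derivWithin (huniq x hx)
  obtain ⟨K, hK, hKe⟩ := aux_lip F (fun x hx => hΦ _ ⟨hU0, hx⟩)
  obtain ⟨L, hL, hLe⟩ := aux_lip G (fun x hx => hGan _ ⟨hU0, hx⟩)
  obtain ⟨V, hVsub, hVo, hV0⟩ := mem_nhds_iff.1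
    (Filter.inter_mem (Filter.inter_mem hKe hLe) (hUopen.mem_nhds hU0))
  obtain ⟨M, hM⟩ : ∃ M, M = 1000 * (1 + L) + L + (1000 * (1 + K) + 30 * K) := ⟨_, rfl⟩
  have hM0 : 0 < M := by rw [hM]; positivity
  refine ⟨4 * M, by positivity, V, fun p hp => (hVsub hp).2, hVo, hV0, ?_⟩
  intro p hpV
  obtain ⟨⟨hpK, hpL⟩, hp⟩ := hVsub hpV
  simp only [Set.mem_setOf_eq] at hpK hpL
  have hsm : |p.1| + |p.2| < 1/100 := hUsub hp
  obtain ⟨s, hs⟩ : ∃ s, s = |p.1| + |p.2| := ⟨_, rfl⟩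
  have hs0 : 0 ≤ s := by rw [hs]; positivity
  have hs1 : s ≤ 1 := by linarith
  have hη : |p.1| ≤ s := by linarith [abs_nonneg p.2]
  have hε : |p.2| ≤ s := by linarith [abs_nonneg p.1]
  have hs2 : s^2 ≤ 2 * (p.1^2 + p.2^2) := by
    rw [hs, ← sq_abs p.1, ← sq_abs p.2]; nlinarith [sq_nonneg (|p.1| - |p.2|)]
  have hbound : ∀ x ∈ Set.Icc (0:ℝ) π,
      |Real.sin x * (H (p, x) + F (p, x)) + (Λ p - 4) * (F (p, x) * Real.sin x)
        - Real.sin x * (p.1 * Real.cos x + (6 * p.2 + 6 * p.1 * x) * Real.sin x)| ≤ M * s^2 := by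
    intro x hx
    obtain ⟨a, ha⟩ : ∃ a, a = p.1 * (1 + p.2) / (1 - p.1 * (1 + p.2) * x) := ⟨_, rfl⟩
    obtain ⟨b, hb⟩ : ∃ b, b = 3 * (1 + p.2)^2 / (1 - p.1 * (1 + p.2) * x)^2 := ⟨_, rfl⟩
    obtain ⟨hc1, hc2⟩ := aux_coeff p.1 p.2 x hsm hx.1 (hx.2.trans hπ4)
    rw [← ha, ← hs] at hc1
    rw [← hb, ← hs] at hc2
    have hode : Real.sin x * (H (p, x) - a * G (p, x) - b * F (p, x) + Λ p * F (p, x)) = 0 := by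
      rcases eq_or_lt_of_le hx.1 with h0 | h0
      · rw [← h0]; simp
      rcases eq_or_lt_of_le hx.2 with h1 | h1
      · rw [h1]; simp
      have := heq p hp x ⟨h0, h1⟩
      rw [Tde, hD2 p hp x hx, hD1 p hp x hx, hFe, ← ha, ← hb] at this
      rw [this, mul_zero]
    have e : Real.sin x * (H (p, x) + F (p, x)) + (Λ p - 4) * (F (p, x) * Real.sin x)
        - Real.sin x * (p.1 * Real.cos x + (6 * p.2 + 6 * p.1 * x) * Real.sin x)
        = Real.sin x * ((a * G (p, x) - p.1 * Real.cos x)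
          + ((b - 3) * F (p, x) - (6 * p.2 + 6 * p.1 * x) * Real.sin x)) := by
      linear_combination hode
    have k1 := hpK x hx
    have k2 := hpL x hx
    rw [hF0 x hx, ← hs] at k1
    rw [hG0 x hx, ← hs] at k2
    have hFb : |F (p, x)| ≤ 1 + K := by
      have := abs_sub_abs_le_abs_sub (F (p, x)) (Real.sin x)
      nlinarith [Real.abs_sin_le_one x]
    have hGb : |G (p, x)| ≤ 1 + L := by
      have := abs_sub_abs_le_abs_sub (G (p, x)) (Real.cos x)
      nlinarith [Real.abs_cos_le_one x]
    have hm : |6 * p.2 + 6 * p.1 * x| ≤ 30 * s := by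
      have hxa : |x| ≤ 4 := by rw [abs_of_nonneg hx.1]; exact hx.2.trans hπ4
      calc |6 * p.2 + 6 * p.1 * x| ≤ |6 * p.2| + |6 * p.1 * x| := abs_add_le _ _
        _ = 6 * |p.2| + 6 * |p.1| * |x| := by simp [abs_mul]
        _ ≤ 6 * s + 6 * s * 4 := by gcongr
        _ = 30 * s := by ring
    have t1 := aux_prod a (G (p, x)) p.1 (Real.cos x) _ _ _ _ hc1 hGb hη k2
      (by positivity) hs0
    have t2 := aux_prod (b - 3) (F (p, x)) _ (Real.sin x) _ _ _ _ hc2 hFb hm k1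
      (by positivity) (by positivity)
    rw [e, abs_mul]
    refine (mul_le_of_le_one_left (abs_nonneg _) (Real.abs_sin_le_one x)).trans ?_
    refine (abs_add_le _ _).trans ((add_le_add t1 t2).trans (le_of_eq ?_))
    rw [hM]; ring
  have hFc : ContinuousOn (fun y => F (p, y)) (Set.uIcc 0 π) := by
    rw [Set.uIcc_of_le hπ.le]
    exact fun x hx => (hFd p hp x hx).continuousAt.continuousWithinAt
  have hHc' : ContinuousOn (fun y => H (p, y)) (Set.uIcc 0 π) := by
    rw [Set.uIcc_of_le hπ.le]; exact hHc p hp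
  have i1 : IntervalIntegrable (fun x => Real.sin x * (H (p, x) + F (p, x)))
      MeasureTheory.volume 0 π :=
    (Real.continuous_sin.continuousOn.mul (hHc'.add hFc)).intervalIntegrable
  have i2 : IntervalIntegrable (fun x => (Λ p - 4) * (F (p, x) * Real.sin x))
      MeasureTheory.volume 0 π :=
    (continuousOn_const.mul (hFc.mul Real.continuous_sin.continuousOn)).intervalIntegrable
  have i3 : IntervalIntegrable (fun x => Real.sin x * (p.1 * Real.cos x
      + (6 * p.2 + 6 * p.1 * x) * Real.sin x)) MeasureTheory.volume 0 π :=
    Continuous.intervalIntegrable (by fun_prop) _ _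
  have I1 : ∫ x in (0:ℝ)..π, Real.sin x * (H (p, x) + F (p, x)) = 0 := by
    have h : ∀ x ∈ Set.uIcc (0:ℝ) π, HasDerivAt
        (fun x => Real.sin x * G (p, x) - Real.cos x * F (p, x))
        (Real.sin x * (H (p, x) + F (p, x))) x := by
      intro x hx
      rw [Set.uIcc_of_le hπ.le] at hx
      have := ((Real.hasDerivAt_sin x).mul (hGd p hp x hx)).sub
        ((Real.hasDerivAt_cos x).mul (hFd p hp x hx))
      exact this.congr_deriv (by ring)
    rw [intervalIntegral.integral_eq_sub_of_hasDerivAt h i1]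
    have h1 := (hbc p hp).1
    have h2 := (hbc p hp).2
    rw [hFe] at h1 h2
    simp [h1, h2]
  have I2 : ∫ x in (0:ℝ)..π, (Λ p - 4) * (F (p, x) * Real.sin x) = (Λ p - 4) * (π / 2) := by
    rw [intervalIntegral.integral_const_mul, ← hnorm p hp]
    simp only [hFe]
  have hint := intervalIntegral.norm_integral_le_of_norm_le_const (a := (0:ℝ)) (b := π)
    (C := M * s^2) (f := fun x => Real.sin x * (H (p, x) + F (p, x))
        + (Λ p - 4) * (F (p, x) * Real.sin x)
        - Real.sin x * (p.1 * Real.cos x + (6 * p.2 + 6 * p.1 * x) * Real.sin x))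
    (by
      intro x hx
      rw [Set.uIoc_of_le hπ.le] at hx
      exact hbound x ⟨hx.1.le, hx.2⟩)
  rw [intervalIntegral.integral_sub (i1.add i2) i3, intervalIntegral.integral_add i1 i2,
    I1, I2, aux_int, Real.norm_eq_abs, sub_zero, abs_of_pos hπ] at hint
  have e : 0 + (Λ p - 4) * (π / 2) - π / 2 * (6 * p.2 + 3 * π * p.1)
      = (π / 2) * (Λ p - 4 - 3 * π * p.1 - 6 * p.2) := by ring
  rw [e, abs_mul, abs_of_pos (by positivity)] at hint
  have h5 : |Λ p - 4 - 3 * π * p.1 - 6 * p.2| ≤ 2 * (M * s^2) := by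
    by_contra hcon
    push Not at hcon
    nlinarith
  nlinarith

end
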